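/- arXiv:1104.3745 — 2 statements merged into one kernel-verified Lean document; each statement's English description precedes it below -/
import Mathlib

section
/- Let X be a real Banach space, x₀ ∈ X, and let Ω ⊊ X be a domain which is starlike with respect to x₀. Then for every r > 0 both the j-ball B_j(x₀,r) and the quasihyperbolic ball B_k(x₀,r) of Ω are starlike with respect to x₀. -/
open Set Metric MeasureTheory

noncomputable section

variable {E : Type*} [NormedAddCommGroup E] [NormedSpace ℝ E]

/-- The quasihyperbolic length of a path `γ` (parametrized on `[0,1]`) in the
domain `Ω`: the integral of `‖γ'(t)‖ / d(γ(t), ∂Ω)`. -/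
def qhLength (Ω : Set E) (γ : ℝ → E) : ℝ :=
  ∫ t in (0:ℝ)..1, ‖deriv γ t‖ / infDist (γ t) (frontier Ω)

/-- A rectifiable curve in `Ω` joining `x` and `y`, formalized as a map on `[0,1]`
which is Lipschitz on `[0,1]` (every rectifiable curve admits such a
parametrization), takes values in `Ω`, and joins `x` to `y`. -/
def IsRectPath (Ω : Set E) (x y : E) (γ : ℝ → E) : Prop :=
  (∃ K : NNReal, LipschitzOnWith K γ (Icc 0 1)) ∧
    MapsTo γ (Icc 0 1) Ω ∧ γ 0 = x ∧ γ 1 = y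

/-- The quasihyperbolic metric on `Ω`. -/
def qhDist (Ω : Set E) (x y : E) : ℝ :=
  sInf (qhLength Ω '' {γ | IsRectPath Ω x y γ})

/-- The quasihyperbolic ball. -/
def qhBall (Ω : Set E) (x : E) (r : ℝ) : Set E :=
  {y ∈ Ω | qhDist Ω x y < r}

/-- The distance ratio metric (`j`-metric) on `Ω`. -/
def jDist (Ω : Set E) (x y : E) : ℝ :=
  Real.log (1 + dist x y / min (infDist x (frontier Ω)) (infDist y (frontier Ω)))

/-- The `j`-metric ball. -/
def jBall (Ω : Set E) (x : E) (r : ℝ) : Set E :=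
  {y ∈ Ω | jDist Ω x y < r}

/-- `G` is strictly starlike with respect to `x`: it is starlike with respect to `x`
and every half-line emanating from `x` meets `∂G` at exactly one point. -/
def StrictlyStarlike (G : Set E) (x : E) : Prop :=
  StarConvex ℝ x G ∧
    ∀ v : E, v ≠ 0 → ∃! p : E, p ∈ frontier G ∧ ∃ t : ℝ, 0 < t ∧ p = x + t • v

/-- `G` is strictly convex: it is strictly starlike with respect to each of its points. -/
def StrictlyConvexSet (G : Set E) : Prop :=
  ∀ x ∈ G, StrictlyStarlike G x

/-- A half-line: `{t • v + z : t > 0}` or `{t • v + z : t ≥ 0}` with `v ≠ 0`. -/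
def IsHalfline (L : Set E) : Prop :=
  ∃ z v : E, v ≠ 0 ∧
    (L = {p | ∃ t : ℝ, 0 < t ∧ p = t • v + z} ∨
      L = {p | ∃ t : ℝ, 0 ≤ t ∧ p = t • v + z})

/-- `G` is close-to-convex: its complement can be covered with pairwise
non-intersecting half-lines. -/
def CloseToConvex (G : Set E) : Prop :=
  ∃ 𝒮 : Set (Set E), (∀ L ∈ 𝒮, IsHalfline L) ∧ 𝒮.PairwiseDisjoint id ∧ Gᶜ = ⋃₀ 𝒮

end

/-!
If `Ω` is starlike with respect to `x₀`, then the homothety `h` with centre `x₀` and ratio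
`0 ≤ c ≤ 1` maps `Ω` into itself, and the distance from `h z` to `∂Ω` is at least `c` times the
distance from `z`: undoing `h` on a point outside `Ω` gives another point outside `Ω`. On the other
hand `h` multiplies all lengths by exactly `c`. The factors `c` cancel in the quotients that define
the `j`-metric and the quasihyperbolic length, so `h` does not increase distances from `x₀` in
either metric.
-/

open AffineMap

section Homothety

variable {𝕜 V P : Type*} [NormedField 𝕜] [SeminormedAddCommGroup V] [NormedSpace 𝕜 V]
  [PseudoMetricSpace P] [NormedAddTorsor V P]

theorem dist_homothety_homothety (p₁ p₂ p₃ : P) (c : 𝕜) :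
    dist (homothety p₁ c p₂) (homothety p₁ c p₃) = ‖c‖ * dist p₂ p₃ := by
  rw [homothety_apply, homothety_apply, dist_vadd_cancel_right, dist_smul₀, dist_vsub_cancel_right]

theorem lipschitzWith_homothety (p : P) (c : 𝕜) :
    LipschitzWith ‖c‖₊ (homothety p c : P → P) :=
  .of_dist_le_mul fun p₂ p₃ => (dist_homothety_homothety p p₂ p₃ c).le

end Homothety

theorem deriv_homothety_comp {𝕜 F : Type*} [NontriviallyNormedField 𝕜] [NormedAddCommGroup F]
    [NormedSpace 𝕜 F] (x : F) (c : 𝕜) (f : 𝕜 → F) (t : 𝕜) :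
    deriv (homothety x c ∘ f) t = c • deriv f t := by
  simp only [Function.comp_def, homothety_apply, vsub_eq_sub, vadd_eq_add, deriv_add_const,
    deriv_fun_const_smul_field, deriv_sub_const]

theorem starConvex_iff_mapsTo_homothety {𝕜 E : Type*} [CommRing 𝕜] [PartialOrder 𝕜]
    [IsOrderedAddMonoid 𝕜] [AddCommGroup E] [Module 𝕜 E] {x : E} {s : Set E} :
    StarConvex 𝕜 x s ↔ ∀ c ∈ Icc (0 : 𝕜) 1, MapsTo (homothety x c) s s := by
  simp only [starConvex_iff_segment_subset, segment_eq_image_lineMap, image_subset_iff,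
    homothety_eq_lineMap, MapsTo]
  exact ⟨fun h c hc y hy => h hy hc, fun h y hy c hc => h c hc hy⟩

theorem nonempty_inter_frontier_of_isPreconnected {α : Type*} [TopologicalSpace α] {s t : Set α}
    (ht : IsPreconnected t) (hs : (t ∩ s).Nonempty) (hsc : (t ∩ sᶜ).Nonempty) :
    (t ∩ frontier s).Nonempty := by
  rw [frontier_eq_closure_inter_closure]
  refine isPreconnected_closed_iff.1 ht _ _ isClosed_closure isClosed_closure ?_
    (hs.mono <| inter_subset_inter_right _ subset_closure)
    (hsc.mono <| inter_subset_inter_right _ subset_closure)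
  exact fun x _ => (em (x ∈ s)).imp (fun h => subset_closure h) (fun h => subset_closure h)

theorem mul_div_le_div_of_mul_le {𝕜 : Type*} [Field 𝕜] [LinearOrder 𝕜] [IsStrictOrderedRing 𝕜]
    {a b c d : 𝕜} (ha : 0 ≤ a) (hb : 0 < b) (hd : 0 < d) (h : c * b ≤ d) :
    c * a / d ≤ a / b := by
  rw [div_le_div_iff₀ hd hb, mul_right_comm, mul_comm a d]
  exact mul_le_mul_of_nonneg_right h ha

section BoundaryDistance

variable {E : Type*} [SeminormedAddCommGroup E] [NormedSpace ℝ E] {s : Set E} {x y : E} {c : ℝ}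

theorem infDist_frontier_eq_infDist_compl (hx : x ∈ s) :
    infDist x (frontier s) = infDist x sᶜ := by
  rcases eq_or_ne s univ with rfl | hs
  · simp
  have hfr : (frontier s).Nonempty := nonempty_frontier_iff.2 ⟨⟨x, hx⟩, hs⟩
  apply le_antisymm
  · refine (le_infDist (nonempty_compl.2 hs)).2 fun p hp => ?_
    obtain ⟨q, hq, hqs⟩ := nonempty_inter_frontier_of_isPreconnected
      (convex_segment (𝕜 := ℝ) x p).isPreconnected
      ⟨x, left_mem_segment ℝ x p, hx⟩ ⟨p, right_mem_segment ℝ x p, hp⟩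
    calc infDist x (frontier s) ≤ dist x q := infDist_le_dist_of_mem hqs
      _ ≤ dist x q + dist q p := le_add_of_nonneg_right dist_nonneg
      _ = dist x p := dist_add_dist_of_mem_segment hq
  · rw [← infDist_closure (s := sᶜ)]
    exact infDist_le_infDist_of_subset
      (frontier_eq_closure_inter_closure.trans_subset inter_subset_right) hfr

theorem infDist_frontier_pos (hs : IsOpen s) (hs_ne : s ≠ univ) (hx : x ∈ s) :
    0 < infDist x (frontier s) := by
  rw [infDist_frontier_eq_infDist_compl hx,
    ← hs.isClosed_compl.notMem_iff_infDist_pos (nonempty_compl.2 hs_ne)]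
  exact not_not_intro hx

theorem mul_infDist_compl_le_infDist_compl_homothety (hs : StarConvex ℝ x s)
    (hc : c ∈ Icc (0 : ℝ) 1) (y : E) :
    c * infDist y sᶜ ≤ infDist (homothety x c y) sᶜ := by
  rcases eq_or_ne s univ with rfl | hs_ne
  · simp
  rcases hc.1.eq_or_lt with rfl | hc_pos
  · simpa only [zero_mul] using infDist_nonneg
  refine (le_infDist (nonempty_compl.2 hs_ne)).2 fun p hp => ?_
  have hp_eq : homothety x c (homothety x c⁻¹ p) = p := by
    rw [← homothety_mul_apply, mul_inv_cancel₀ hc_pos.ne', homothety_one, id_apply]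
  have hp_inv : homothety x c⁻¹ p ∈ sᶜ := fun h =>
    hp (hp_eq ▸ starConvex_iff_mapsTo_homothety.1 hs c hc h)
  calc c * infDist y sᶜ ≤ c * dist y (homothety x c⁻¹ p) := by
        gcongr
        exact infDist_le_dist_of_mem hp_inv
    _ = dist (homothety x c y) (homothety x c (homothety x c⁻¹ p)) := by
        rw [dist_homothety_homothety, Real.norm_of_nonneg hc.1]
    _ = dist (homothety x c y) p := by rw [hp_eq]

theorem mul_infDist_frontier_le_infDist_frontier_homothety (hs : StarConvex ℝ x s)
    (hc : c ∈ Icc (0 : ℝ) 1) (hy : y ∈ s) :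
    c * infDist y (frontier s) ≤ infDist (homothety x c y) (frontier s) := by
  rw [infDist_frontier_eq_infDist_compl hy,
    infDist_frontier_eq_infDist_compl (starConvex_iff_mapsTo_homothety.1 hs c hc hy)]
  exact mul_infDist_compl_le_infDist_compl_homothety hs hc y

end BoundaryDistance

section Balls

variable {E : Type*} [NormedAddCommGroup E] [NormedSpace ℝ E] {Ω : Set E} {x y z : E} {c : ℝ}
  {γ : ℝ → E}

theorem jDist_homothety_le (hΩ : IsOpen Ω) (hΩ_ne : Ω ≠ univ) (hstar : StarConvex ℝ x Ω)
    (hc : c ∈ Icc (0 : ℝ) 1) (hy : y ∈ Ω) :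
    jDist Ω x (homothety x c y) ≤ jDist Ω x y := by
  have hdx := infDist_frontier_pos hΩ hΩ_ne (hstar.mem ⟨y, hy⟩)
  have hd := lt_min hdx (infDist_frontier_pos hΩ hΩ_ne hy)
  have hd' := lt_min hdx
    (infDist_frontier_pos hΩ hΩ_ne (starConvex_iff_mapsTo_homothety.1 hstar c hc hy))
  have hmin : c * min (infDist x (frontier Ω)) (infDist y (frontier Ω)) ≤
      min (infDist x (frontier Ω)) (infDist (homothety x c y) (frontier Ω)) := by
    rw [mul_min_of_nonneg _ _ hc.1]
    exact min_le_min (mul_le_of_le_one_left hdx.le hc.2)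
      (mul_infDist_frontier_le_infDist_frontier_homothety hstar hc hy)
  unfold jDist
  rw [dist_center_homothety, Real.norm_of_nonneg hc.1]
  refine Real.log_le_log ?_ (add_le_add_right (mul_div_le_div_of_mul_le dist_nonneg hd hd' hmin) 1)
  have := mul_nonneg hc.1 (dist_nonneg (x := x) (y := y))
  positivity

theorem starConvex_jBall (hΩ : IsOpen Ω) (hΩ_ne : Ω ≠ univ) (hstar : StarConvex ℝ x Ω) (r : ℝ) :
    StarConvex ℝ x (jBall Ω x r) :=
  starConvex_iff_mapsTo_homothety.2 fun c hc _y ⟨hy, hyr⟩ =>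
    ⟨starConvex_iff_mapsTo_homothety.1 hstar c hc hy,
      (jDist_homothety_le hΩ hΩ_ne hstar hc hy).trans_lt hyr⟩

theorem isRectPath_lineMap (h : segment ℝ x y ⊆ Ω) : IsRectPath Ω x y (lineMap x y) :=
  ⟨⟨nndist x y, (lipschitzWith_lineMap x y).lipschitzOnWith⟩,
    fun _t ht => h (lineMap_mem_segment ℝ x y ht), lineMap_apply_zero x y, lineMap_apply_one x y⟩

theorem IsRectPath.homothety_comp (hγ : IsRectPath Ω x y γ) (hΩ : MapsTo (homothety z c) Ω Ω) :
    IsRectPath Ω (homothety z c x) (homothety z c y) (homothety z c ∘ γ) := by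
  obtain ⟨⟨K, hK⟩, hmaps, rfl, rfl⟩ := hγ
  exact ⟨⟨‖c‖₊ * K, (lipschitzWith_homothety z c).comp_lipschitzOnWith hK⟩, hΩ.comp hmaps, rfl, rfl⟩

theorem qhLength_nonneg (Ω : Set E) (γ : ℝ → E) : 0 ≤ qhLength Ω γ :=
  intervalIntegral.integral_nonneg zero_le_one
    fun _t _ => div_nonneg (norm_nonneg _) infDist_nonneg

theorem IsRectPath.qhDist_le_qhLength (hγ : IsRectPath Ω x y γ) : qhDist Ω x y ≤ qhLength Ω γ :=
  csInf_le ⟨0, forall_mem_image.2 fun γ' _ => qhLength_nonneg Ω γ'⟩ (mem_image_of_mem _ hγ)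

theorem intervalIntegrable_norm_deriv_of_lipschitzOnWith [CompleteSpace E] {K : NNReal} {a b : ℝ}
    (hγ : LipschitzOnWith K γ (uIcc a b)) :
    IntervalIntegrable (fun t => ‖deriv γ t‖) volume a b := by
  rw [intervalIntegrable_iff, uIoc, integrableOn_Ioc_iff_integrableOn_Ioo]
  borelize E
  refine Measure.integrableOn_of_bounded (M := K) measure_Ioo_lt_top.ne
    (measurable_deriv γ).norm.aestronglyMeasurable ?_
  filter_upwards [ae_restrict_mem measurableSet_Ioo] with t ht
  rw [norm_norm]
  exact norm_deriv_le_of_lipschitzOn (Icc_mem_nhds ht.1 ht.2) hγ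

theorem IsRectPath.intervalIntegrable [CompleteSpace E] (hΩ : IsOpen Ω) (hΩ_ne : Ω ≠ univ)
    (hγ : IsRectPath Ω x y γ) :
    IntervalIntegrable (fun t => ‖deriv γ t‖ / infDist (γ t) (frontier Ω)) volume 0 1 := by
  obtain ⟨⟨K, hK⟩, hmaps, -, -⟩ := hγ
  rw [← uIcc_of_le zero_le_one] at hK hmaps
  have hinv : ContinuousOn (fun t => (infDist (γ t) (frontier Ω))⁻¹) (uIcc 0 1) :=
    ((continuous_infDist_pt _).comp_continuousOn hK.continuousOn).inv₀
      fun t ht => (infDist_frontier_pos hΩ hΩ_ne (hmaps ht)).ne'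
  simpa only [div_eq_mul_inv] using
    (intervalIntegrable_norm_deriv_of_lipschitzOnWith hK).mul_continuousOn hinv

theorem IsRectPath.qhLength_homothety_comp_le [CompleteSpace E] (hΩ : IsOpen Ω) (hΩ_ne : Ω ≠ univ)
    (hstar : StarConvex ℝ z Ω) (hc : c ∈ Icc (0 : ℝ) 1) (hγ : IsRectPath Ω x y γ) :
    qhLength Ω (homothety z c ∘ γ) ≤ qhLength Ω γ := by
  have hmaps := starConvex_iff_mapsTo_homothety.1 hstar c hc
  refine intervalIntegral.integral_mono_on zero_le_one
    ((hγ.homothety_comp hmaps).intervalIntegrable hΩ hΩ_ne) (hγ.intervalIntegrable hΩ hΩ_ne) ?_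
  intro t ht
  have hγt : γ t ∈ Ω := hγ.2.1 ht
  rw [deriv_homothety_comp, norm_smul, Real.norm_of_nonneg hc.1]
  exact mul_div_le_div_of_mul_le (norm_nonneg _) (infDist_frontier_pos hΩ hΩ_ne hγt)
    (infDist_frontier_pos hΩ hΩ_ne (hmaps hγt))
    (mul_infDist_frontier_le_infDist_frontier_homothety hstar hc hγt)

theorem qhDist_homothety_le [CompleteSpace E] (hΩ : IsOpen Ω) (hΩ_ne : Ω ≠ univ)
    (hstar : StarConvex ℝ x Ω) (hc : c ∈ Icc (0 : ℝ) 1) (hy : y ∈ Ω) :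
    qhDist Ω x (homothety x c y) ≤ qhDist Ω x y := by
  have hpaths : {γ | IsRectPath Ω x y γ}.Nonempty :=
    ⟨_, isRectPath_lineMap (hstar.segment_subset hy)⟩
  refine le_csInf (hpaths.image _) (forall_mem_image.2 fun γ hγ => ?_)
  have hγ' := hγ.homothety_comp (starConvex_iff_mapsTo_homothety.1 hstar c hc)
  rw [homothety_apply_same] at hγ'
  exact hγ'.qhDist_le_qhLength.trans (hγ.qhLength_homothety_comp_le hΩ hΩ_ne hstar hc)

theorem starConvex_qhBall [CompleteSpace E] (hΩ : IsOpen Ω) (hΩ_ne : Ω ≠ univ)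
    (hstar : StarConvex ℝ x Ω) (r : ℝ) :
    StarConvex ℝ x (qhBall Ω x r) :=
  starConvex_iff_mapsTo_homothety.2 fun c hc _y ⟨hy, hyr⟩ =>
    ⟨starConvex_iff_mapsTo_homothety.1 hstar c hc hy,
      (qhDist_homothety_le hΩ hΩ_ne hstar hc hy).trans_lt hyr⟩

end Balls

/-- in a domain of a real Banach space which is starlike with respect to
`x₀`, all `j`-balls and quasihyperbolic balls centered at `x₀` are starlike with
respect to `x₀`. -/
theorem qh_and_j_balls_starlike_banach (X : Type*) [NormedAddCommGroup X]
    [NormedSpace ℝ X] [CompleteSpace X] (Ω : Set X)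
    (hopen : IsOpen Ω) (hconn : IsConnected Ω) (hproper : Ω ≠ univ)
    (x₀ : X) (hx₀ : x₀ ∈ Ω) (hstar : StarConvex ℝ x₀ Ω) (r : ℝ) (hr : 0 < r) :
    StarConvex ℝ x₀ (jBall Ω x₀ r) ∧ StarConvex ℝ x₀ (qhBall Ω x₀ r) :=
  ⟨starConvex_jBall hopen hproper hstar r, starConvex_qhBall hopen hproper hstar r⟩
end

section
/- Let Ω = ℝ² \ { e₁, −e₁ } ⊂ ℝ², where e₁ = (1,0), and let x = √3·e₂ = (0,√3). There exists ε₀ > 0 such that for every ε with 0 < ε < ε₀ the j-metric ball B_j(x, log(1+√3) + ε) is disconnected. -/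
open Set Metric MeasureTheory

/-!
Put `c = exp r - 1`. A point `y` lies in `jBall Sᶜ x r` exactly when `dist x y < c * d(x, S)` and
`dist x y < c * dist y s` for every `s ∈ S`; for `c > 1` the second condition removes an Apollonian
disk around each `s`. With `x = √3 e₂`, `S = {±e₁}` and `c = √3`, these disks have radius `√3` and
centers `(±3/2, -√3/2)`, so on the horizontal line through the centers they overlap and cover the
whole chord cut out by the first condition, with enough room that this persists for `c ≤ 9/5`. The
line separates `x` from `-x`, and `-x` belongs to the ball as soon as `c > √3`.
-/

lemma lt_mul_infDist_iff_of_isCompact {X : Type*} [PseudoMetricSpace X] {K : Set X}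
    (hK : IsCompact K) (hne : K.Nonempty) {c : ℝ} (hc : 0 ≤ c) (t : ℝ) (p : X) :
    t < c * infDist p K ↔ ∀ s ∈ K, t < c * dist p s := by
  refine ⟨fun h s hs ↦ h.trans_le ?_, fun h ↦ ?_⟩
  · gcongr
    exact infDist_le_dist_of_mem hs
  · obtain ⟨s, hs, hps⟩ := hK.exists_infDist_eq_dist hne p
    exact hps ▸ h s hs

section JBall

variable {E : Type*} [NormedAddCommGroup E] {S : Set E} {x y : E} {r : ℝ}

lemma self_mem_jBall {Ω : Set E} (hx : x ∈ Ω) (hr : 0 < r) : x ∈ jBall Ω x r :=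
  ⟨hx, by simpa [jDist] using hr⟩

lemma mem_jBall_compl_iff_lt_mul_min_infDist (hS : IsClosed S) (hne : S.Nonempty)
    (hdense : Dense Sᶜ) (hx : x ∉ S) :
    y ∈ jBall Sᶜ x r ↔
      dist x y < (Real.exp r - 1) * min (infDist x S) (infDist y S) := by
  have hfrontier : frontier Sᶜ = S := by
    rw [frontier_compl, hS.frontier_eq, interior_eq_empty_iff_dense_compl.2 hdense, sdiff_empty]
  by_cases hy : y ∈ S
  · have hdist : ¬ dist x y < 0 := dist_nonneg.not_gt
    simp [jBall, hy, infDist_zero_of_mem hy, min_eq_right infDist_nonneg, hdist]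
  · have hmin : 0 < min (infDist x S) (infDist y S) :=
      lt_min ((hS.notMem_iff_infDist_pos hne).1 hx) ((hS.notMem_iff_infDist_pos hne).1 hy)
    have hmem : y ∈ jBall Sᶜ x r ↔ jDist Sᶜ x y < r := and_iff_right hy
    rw [hmem, jDist, hfrontier, Real.log_lt_iff_lt_exp (by positivity), ← lt_sub_iff_add_lt',
      div_lt_iff₀ hmin]

theorem mem_jBall_compl_iff (hS : IsCompact S) (hne : S.Nonempty) (hdense : Dense Sᶜ)
    (hx : x ∉ S) (hr : 0 ≤ r) :
    y ∈ jBall Sᶜ x r ↔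
      (∀ s ∈ S, dist x y < (Real.exp r - 1) * dist x s) ∧
        ∀ s ∈ S, dist x y < (Real.exp r - 1) * dist y s := by
  have hc : 0 ≤ Real.exp r - 1 := sub_nonneg.2 (Real.one_le_exp hr)
  rw [mem_jBall_compl_iff_lt_mul_min_infDist hS.isClosed hne hdense hx, mul_min_of_nonneg _ _ hc,
    lt_min_iff, lt_mul_infDist_iff_of_isCompact hS hne hc,
    lt_mul_infDist_iff_of_isCompact hS hne hc]

end JBall

section TwicePuncturedPlane

local notation "e₁" => (EuclideanSpace.single 0 1 : EuclideanSpace ℝ (Fin 2))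
local notation "e₂" => (EuclideanSpace.single 1 1 : EuclideanSpace ℝ (Fin 2))

variable {y : EuclideanSpace ℝ (Fin 2)} {r : ℝ}

lemma dist_e₁_sq (y : EuclideanSpace ℝ (Fin 2)) : dist y e₁ ^ 2 = (y 0 - 1) ^ 2 + y 1 ^ 2 := by
  simp [EuclideanSpace.dist_sq_eq, Real.dist_eq]

lemma dist_neg_e₁_sq (y : EuclideanSpace ℝ (Fin 2)) :
    dist y (-e₁) ^ 2 = (y 0 + 1) ^ 2 + y 1 ^ 2 := by
  simp [EuclideanSpace.dist_sq_eq, Real.dist_eq]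

lemma dist_smul_e₂_sq (t : ℝ) (y : EuclideanSpace ℝ (Fin 2)) :
    dist (t • e₂) y ^ 2 = y 0 ^ 2 + (t - y 1) ^ 2 := by
  simp [EuclideanSpace.dist_sq_eq, Real.dist_eq]

lemma dist_smul_e₂_of_mem_pair {t : ℝ} {s : EuclideanSpace ℝ (Fin 2)}
    (hs : s ∈ ({e₁, -e₁} : Set (EuclideanSpace ℝ (Fin 2)))) : dist (t • e₂) s = √(1 + t ^ 2) := by
  rw [eq_comm, Real.sqrt_eq_iff_eq_sq (by positivity) dist_nonneg]
  rcases hs with rfl | rfl <;> simp [dist_smul_e₂_sq]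

lemma smul_e₂_notMem_pair (t : ℝ) :
    t • e₂ ∉ ({e₁, -e₁} : Set (EuclideanSpace ℝ (Fin 2))) := fun h ↦ by
  have hpos : 0 < √(1 + t ^ 2) := by positivity
  simp [← dist_smul_e₂_of_mem_pair h] at hpos

theorem mem_jBall_compl_pair_iff (t : ℝ) (hr : 0 ≤ r) :
    y ∈ jBall {e₁, -e₁}ᶜ (t • e₂) r ↔
      dist (t • e₂) y < (Real.exp r - 1) * √(1 + t ^ 2) ∧
        dist (t • e₂) y < (Real.exp r - 1) * dist y e₁ ∧
          dist (t • e₂) y < (Real.exp r - 1) * dist y (-e₁) := by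
  have hfin : ({e₁, -e₁} : Set (EuclideanSpace ℝ (Fin 2))).Finite := toFinite _
  rw [mem_jBall_compl_iff hfin.isCompact (insert_nonempty _ _) (hfin.countable.dense_compl ℝ)
    (smul_e₂_notMem_pair t) hr]
  simp [dist_smul_e₂_of_mem_pair]

theorem neg_mem_jBall_compl_pair_iff (t : ℝ) (hr : 0 ≤ r) :
    -(t • e₂) ∈ jBall {e₁, -e₁}ᶜ (t • e₂) r ↔
      2 * |t| < (Real.exp r - 1) * √(1 + t ^ 2) := by
  have hdist : dist (t • e₂) (-(t • e₂)) = 2 * |t| := by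
    rw [dist_eq_norm, sub_neg_eq_add, ← two_smul ℝ, norm_smul, norm_smul]
    simp
  have hpuncture (s : EuclideanSpace ℝ (Fin 2))
      (hs : s ∈ ({e₁, -e₁} : Set (EuclideanSpace ℝ (Fin 2)))) :
      dist (-(t • e₂)) s = √(1 + t ^ 2) := by
    rw [← neg_smul, dist_smul_e₂_of_mem_pair hs, neg_sq]
  rw [mem_jBall_compl_pair_iff t hr, hdist, hpuncture e₁ (by simp), hpuncture (-e₁) (by simp),
    and_self, and_self]

lemma sqrt_one_add_sqrt_three_sq : √(1 + √3 ^ 2) = 2 := by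
  rw [Real.sqrt_eq_iff_eq_sq (by positivity) two_pos.le, Real.sq_sqrt] <;> norm_num

lemma apollonian_inequality_on_chord {a : ℝ} (ha : 0 ≤ a)
    (hchord : a ^ 2 + 27 / 4 < (9 / 5 * 2) ^ 2) :
    (9 / 5) ^ 2 * ((a - 1) ^ 2 + 3 / 4) ≤ a ^ 2 + 27 / 4 := by
  have ha_lt : a < 5 / 2 := lt_of_pow_lt_pow_left₀ 2 (by norm_num) (by linarith)
  have hprod : 0 ≤ a * (5 / 2 - a) := mul_nonneg ha (sub_nonneg.2 ha_lt.le)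
  linarith

lemma mul_dist_e₁_le_or_mul_dist_neg_e₁_le (hy : y 1 = -√3 / 2)
    (hchord : dist (√3 • e₂) y < 9 / 5 * 2) :
    9 / 5 * dist y e₁ ≤ dist (√3 • e₂) y ∨ 9 / 5 * dist y (-e₁) ≤ dist (√3 • e₂) y := by
  have hsqrt : √3 ^ 2 = 3 := Real.sq_sqrt (by norm_num)
  have hcenter : dist (√3 • e₂) y ^ 2 = y 0 ^ 2 + 27 / 4 := by
    rw [dist_smul_e₂_sq, hy]; linarith
  have hchord_sq : y 0 ^ 2 + 27 / 4 < (9 / 5 * 2) ^ 2 :=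
    hcenter ▸ pow_lt_pow_left₀ hchord dist_nonneg two_ne_zero
  rcases le_total 0 (y 0) with hright | hleft
  · refine .inl ((sq_le_sq₀ (by positivity) dist_nonneg).1 ?_)
    rw [mul_pow, dist_e₁_sq, hy, hcenter]
    linarith [apollonian_inequality_on_chord hright hchord_sq]
  · refine .inr ((sq_le_sq₀ (by positivity) dist_nonneg).1 ?_)
    rw [mul_pow, dist_neg_e₁_sq, hy, hcenter]
    linarith [apollonian_inequality_on_chord (neg_nonneg.2 hleft) (by rwa [neg_sq])]

theorem notMem_jBall_of_apply_one_eq (hr : 0 ≤ r) (hr_le : Real.exp r ≤ 14 / 5)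
    (hy : y 1 = -√3 / 2) : y ∉ jBall {e₁, -e₁}ᶜ (√3 • e₂) r := by
  have lt_mul {d : ℝ} (hd : 0 ≤ d) (h : dist (√3 • e₂) y < (Real.exp r - 1) * d) :
      dist (√3 • e₂) y < 9 / 5 * d :=
    h.trans_le (mul_le_mul_of_nonneg_right (by linarith) hd)
  rw [mem_jBall_compl_pair_iff _ hr, sqrt_one_add_sqrt_three_sq]
  rintro ⟨hchord, h₁, h₂⟩
  exact (mul_dist_e₁_le_or_mul_dist_neg_e₁_le hy (lt_mul two_pos.le hchord)).elim
    (lt_mul dist_nonneg h₁).not_ge (lt_mul dist_nonneg h₂).not_ge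

theorem not_isPreconnected_jBall_compl_pair (hr : 1 + √3 < Real.exp r)
    (hr_le : Real.exp r ≤ 14 / 5) : ¬ IsPreconnected (jBall {e₁, -e₁}ᶜ (√3 • e₂) r) := by
  have hsqrt : 0 < √3 := by positivity
  have hr_pos : 0 < r := Real.one_lt_exp_iff.1 (by linarith)
  intro hconn
  have hcenter : √3 • e₂ ∈ jBall {e₁, -e₁}ᶜ (√3 • e₂) r :=
    self_mem_jBall (smul_e₂_notMem_pair _) hr_pos
  have hneg : -(√3 • e₂) ∈ jBall {e₁, -e₁}ᶜ (√3 • e₂) r := by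
    rw [neg_mem_jBall_compl_pair_iff _ hr_pos.le, abs_of_pos hsqrt, sqrt_one_add_sqrt_three_sq]
    linarith
  have hcont : Continuous fun y : EuclideanSpace ℝ (Fin 2) ↦ y 1 := by fun_prop
  have hline : -√3 / 2 ∈ Icc ((-(√3 • e₂)) 1) ((√3 • e₂) 1) := by
    simp only [PiLp.neg_apply, PiLp.smul_apply, PiLp.single_apply, if_true, smul_eq_mul,
      mul_one, mem_Icc]
    constructor <;> linarith
  obtain ⟨y, hy, hy_line⟩ := hconn.intermediate_value hneg hcenter hcont.continuousOn hline
  exact notMem_jBall_of_apply_one_eq hr_pos.le hr_le hy_line hy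

end TwicePuncturedPlane

/-- in `Ω = ℝ² \ {e₁, -e₁}` the `j`-metric ball centered at `√3·e₂` of
radius `log(1+√3) + ε` is disconnected for all sufficiently small `ε > 0`. -/
theorem j_ball_disconnected_example :
    ∃ ε₀ > (0:ℝ), ∀ ε : ℝ, 0 < ε → ε < ε₀ →
      ¬ IsConnected
          (jBall
            ({EuclideanSpace.single 0 (1:ℝ),
                -EuclideanSpace.single 0 (1:ℝ)}ᶜ : Set (EuclideanSpace ℝ (Fin 2)))
            (Real.sqrt 3 • EuclideanSpace.single 1 (1:ℝ))
            (Real.log (1 + Real.sqrt 3) + ε)) := by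
  have hsqrt : √3 < 9 / 5 := (Real.sqrt_lt' (by norm_num)).2 (by norm_num)
  refine ⟨Real.log (14 / 5) - Real.log (1 + √3),
    sub_pos.2 (Real.log_lt_log (by positivity) (by linarith)), fun ε hε hε' hconn ↦ ?_⟩
  refine not_isPreconnected_jBall_compl_pair ?_ ?_ hconn.isPreconnected
  · exact (Real.log_lt_iff_lt_exp (by positivity)).1 (lt_add_of_pos_right _ hε)
  · exact (Real.le_log_iff_exp_le (by norm_num)).1 (lt_sub_iff_add_lt'.1 hε').le
end
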